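/- Let k ≥ 1 be an integer, ε ∈ (0,1) a constant, and C = k·ε^{−2}. Suppose Builder follows any deterministic online strategy with the property that, for every i ≤ ⌊Cn⌋, if both endpoints of e_i have degree less than k in B_{i−1}, then Builder purchases e_i. Then, with high probability, B_{⌊Cn⌋} has at most εn vertices of degree at most k−1. -/

import Mathlib

open Finset Filter

namespace RGP

/-- Number of edges of the complete graph on `n` vertices. -/
def numEdges (n : ℕ) : ℕ := n * (n - 1) / 2

/-- An edge of the complete graph on `Fin n` (an unordered pair of distinct vertices). -/
abbrev EdgeType (n : ℕ) := {e : Sym2 (Fin n) // ¬ e.IsDiag}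

/-- A uniformly random permutation of the edges of `K_n` is modelled by a bijection
`σ` between positions `Fin (numEdges n)` and edges; `σ i` is the edge `e_{i+1}`. -/
abbrev Ord (n : ℕ) := Fin (numEdges n) ≃ EdgeType n

/-- Degree of a vertex `v` in a set `S` of edges. -/
def deg {n : ℕ} (S : Finset (Sym2 (Fin n))) (v : Fin n) : ℕ :=
  (S.filter (fun e => v ∈ e)).card

/-- The edge set `{e_1, …, e_m}` of `G_{n,m}` in the random graph process `σ`. -/
def procEdges {n : ℕ} (σ : Ord n) (m : ℕ) : Finset (Sym2 (Fin n)) :=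
  (Finset.univ.filter (fun i : Fin (numEdges n) => (i : ℕ) < m)).image (fun i => (σ i).1)

/-- The hitting time `τ_k` for minimum degree at least `k`. -/
noncomputable def tau {n : ℕ} (k : ℕ) (σ : Ord n) : ℕ :=
  sInf {m | ∀ v : Fin n, k ≤ deg (procEdges σ m) v}

open scoped Classical in
/-- The probability of an event under the uniformly random edge ordering. -/
noncomputable def Pr {n : ℕ} (p : Ord n → Prop) : ℝ :=
  ((Finset.univ : Finset (Ord n)).filter p).card / (Fintype.card (Ord n) : ℝ)

/-- A deterministic online strategy: given the sequence of edges revealed so far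
(the last entry being the edge just revealed), decide whether to purchase it. -/
abbrev Strategy (n : ℕ) := List (Sym2 (Fin n)) → Bool

/-- The list of the first `i` revealed edges `e_1, …, e_i`. -/
def prefixList {n : ℕ} (σ : Ord n) (i : ℕ) : List (Sym2 (Fin n)) :=
  (List.range i).filterMap (fun j => if h : j < numEdges n then some (σ ⟨j, h⟩).1 else none)

/-- `buy st σ i` is the edge set of Builder's graph `B_i`: the edges purchased by the
strategy `st` among `e_1, …, e_i`. -/
def buy {n : ℕ} (st : Strategy n) (σ : Ord n) : ℕ → Finset (Sym2 (Fin n))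
  | 0 => ∅
  | i + 1 =>
    if h : i < numEdges n then
      if st (prefixList σ (i + 1)) then insert (σ ⟨i, h⟩).1 (buy st σ i)
      else buy st σ i
    else buy st σ i

end RGP

namespace RGP

section Abstract
variable {α E : Type*} [Fintype α] [DecidableEq α] [Fintype E] [DecidableEq E]

/-- Number of bijections that map `S` into `B`. -/
def cnt (S : Finset α) (B : Finset E) : ℕ :=
  ((univ : Finset (α ≃ E)).filter (fun σ => ∀ i ∈ S, σ i ∈ B)).card

lemma cnt_swap (S : Finset α) (B : Finset E) {i j : α} (hi : i ∉ S) (hj : j ∉ S) :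
    cnt (insert i S) B = cnt (insert j S) B := by
  unfold cnt
  have key : ∀ a ∈ S, Equiv.swap i j a = a := fun a ha =>
    Equiv.swap_apply_of_ne_of_ne (fun h => hi (h ▸ ha)) (fun h => hj (h ▸ ha))
  refine Finset.card_bij' (fun σ _ => (Equiv.swap i j).trans σ)
    (fun σ _ => (Equiv.swap i j).trans σ) ?_ ?_ ?_ ?_
  · intro σ h
    simp only [mem_filter, mem_univ, true_and, mem_insert, forall_eq_or_imp] at h ⊢
    refine ⟨by simpa using h.1, fun a ha => ?_⟩
    simpa [key a ha] using h.2 a ha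
  · intro σ h
    simp only [mem_filter, mem_univ, true_and, mem_insert, forall_eq_or_imp] at h ⊢
    refine ⟨by simpa using h.1, fun a ha => ?_⟩
    simpa [key a ha] using h.2 a ha
  · intro σ _
    ext x; simp
  · intro σ _
    ext x; simp

lemma cnt_sum (S : Finset α) (B : Finset E) :
    ∑ j ∈ Sᶜ, cnt (insert j S) B = (B.card - S.card) * cnt S B := by
  classical
  have h1 : ∀ j, cnt (insert j S) B =
      ∑ σ ∈ (univ : Finset (α ≃ E)).filter (fun σ => ∀ i ∈ S, σ i ∈ B),
        if σ j ∈ B then 1 else 0 := by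
    intro j
    rw [← Finset.card_filter, Finset.filter_filter]
    unfold cnt
    congr 1
    ext σ
    simp [and_comm]
  simp_rw [h1]
  rw [Finset.sum_comm]
  unfold cnt
  rw [mul_comm, ← smul_eq_mul, ← Finset.sum_const]
  refine Finset.sum_congr rfl fun σ hσ => ?_
  simp only [mem_filter, mem_univ, true_and] at hσ
  rw [← Finset.card_filter]
  have h2 : (Sᶜ.filter (fun j => σ j ∈ B)).map σ.toEmbedding = B \ S.map σ.toEmbedding := by
    ext e
    rw [Finset.mem_sdiff]
    simp only [mem_map_equiv, mem_filter, mem_compl, Equiv.apply_symm_apply]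
    tauto
  rw [← Finset.card_map σ.toEmbedding, h2, Finset.card_sdiff_of_subset, Finset.card_map]
  intro e he
  rw [mem_map_equiv] at he
  simpa using hσ _ he

lemma cnt_step (S : Finset α) (B : Finset E) {i : α} (hi : i ∉ S)
    (hB : B.card ≤ Fintype.card α) :
    Fintype.card α * cnt (insert i S) B ≤ B.card * cnt S B := by
  have h := cnt_sum S B
  rw [Finset.sum_congr rfl (fun j hj => cnt_swap S B (Finset.mem_compl.1 hj) hi),
    Finset.sum_const, Finset.card_compl, smul_eq_mul] at h
  have hs : S.card < Fintype.card α := by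
    rw [← Finset.card_univ]
    exact Finset.card_lt_card ⟨subset_univ _, fun h => hi (h (mem_univ i))⟩
  obtain ⟨d, hd⟩ := Nat.exists_eq_add_of_lt hs
  have e1 : Fintype.card α - S.card = d + 1 := by omega
  rw [e1] at h
  rw [hd]
  by_cases hb : B.card ≤ S.card
  · rw [Nat.sub_eq_zero_of_le hb, zero_mul] at h
    have : cnt (insert i S) B = 0 := by
      rcases Nat.mul_eq_zero.1 h with h | h
      · omega
      · exact h
    rw [this]; simp
  · push Not at hb
    obtain ⟨b, hb'⟩ := Nat.exists_eq_add_of_lt hb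
    have e2 : B.card - S.card = b + 1 := by omega
    rw [e2] at h
    have hbd : b ≤ d := by omega
    have hle : cnt (insert i S) B ≤ cnt S B := by
      unfold cnt
      apply Finset.card_le_card
      intro σ hσ
      simp only [mem_filter, mem_univ, true_and, mem_insert, forall_eq_or_imp] at hσ ⊢
      exact hσ.2
    rw [hb']
    nlinarith

lemma cnt_le (S : Finset α) (B : Finset E) (hB : B.card ≤ Fintype.card α) :
    Fintype.card α ^ S.card * cnt S B ≤ B.card ^ S.card * Fintype.card (α ≃ E) := by
  induction S using Finset.induction_on with
  | empty => simp [cnt]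
  | insert i S hi ih =>
    rw [Finset.card_insert_of_notMem hi, pow_succ, pow_succ]
    calc _ = Fintype.card α ^ S.card * (Fintype.card α * cnt (insert i S) B) := by ring
      _ ≤ Fintype.card α ^ S.card * (B.card * cnt S B) := Nat.mul_le_mul_left _ (cnt_step S B hi hB)
      _ = B.card * (Fintype.card α ^ S.card * cnt S B) := by ring
      _ ≤ B.card * (B.card ^ S.card * Fintype.card (α ≃ E)) := by gcongr
      _ = _ := by ring

lemma moment (P : Finset α) (B : Finset E) (hB : B.card ≤ Fintype.card α)
    (hα : 0 < Fintype.card α) :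
    ∑ σ : α ≃ E, (4 : ℝ) ^ (P.filter (fun i => σ i ∈ B)).card ≤
      Fintype.card (α ≃ E) * (1 + 3 * ((B.card : ℝ) / Fintype.card α)) ^ P.card := by
  classical
  have h1 : ∀ σ : α ≃ E, (4 : ℝ) ^ (P.filter (fun i => σ i ∈ B)).card =
      ∑ S ∈ P.powerset, (3 : ℝ) ^ S.card * (if ∀ i ∈ S, σ i ∈ B then 1 else 0) := by
    intro σ
    have : (4 : ℝ) ^ (P.filter (fun i => σ i ∈ B)).card =
        ∏ i ∈ P, (1 + (if σ i ∈ B then (3 : ℝ) else 0)) := by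
      rw [← Finset.prod_const, Finset.prod_filter]
      refine Finset.prod_congr rfl fun i _ => ?_
      split_ifs <;> norm_num
    rw [this, Finset.prod_one_add]
    refine Finset.sum_congr rfl fun S _ => ?_
    split_ifs with h
    · rw [Finset.prod_congr rfl (fun i hi => if_pos (h i hi)), Finset.prod_const, mul_one]
    · push Not at h
      obtain ⟨i, hi, hi'⟩ := h
      rw [mul_zero]
      exact Finset.prod_eq_zero hi (if_neg hi')
  simp_rw [h1]
  rw [Finset.sum_comm]
  have h2 : (1 + 3 * ((B.card : ℝ) / Fintype.card α)) ^ P.card =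
      ∑ S ∈ P.powerset, (3 * ((B.card : ℝ) / Fintype.card α)) ^ S.card := by
    rw [← Finset.prod_const, Finset.prod_one_add]
    simp
  rw [h2, Finset.mul_sum]
  refine Finset.sum_le_sum fun S _ => ?_
  rw [← Finset.mul_sum, Finset.sum_boole]
  have h3 := cnt_le S B hB
  have h4 : (Fintype.card α : ℝ) ^ S.card * cnt S B ≤ B.card ^ S.card * Fintype.card (α ≃ E) := by
    exact_mod_cast h3
  have hα' : (0 : ℝ) < Fintype.card α := by exact_mod_cast hα
  have h5 : (cnt S B : ℝ) ≤ Fintype.card (α ≃ E) * ((B.card : ℝ) / Fintype.card α) ^ S.card := by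
    rw [div_pow, ← mul_div_assoc, le_div_iff₀ (by positivity)]
    linarith
  rw [mul_pow]
  unfold cnt at h5
  have : (0 : ℝ) ≤ 3 ^ S.card := by positivity
  nlinarith

lemma tail (P : Finset α) (A : Finset E) (hE : Fintype.card E = Fintype.card α)
    (hα : 0 < Fintype.card α) (L : ℕ) :
    (((univ : Finset (α ≃ E)).filter
      (fun σ => 2 * (P.filter (fun i => σ i ∈ A)).card ≤ L)).card : ℝ) ≤
      Fintype.card (α ≃ E) * (2 ^ L *
        Real.exp (-(3 / 4) * ((A.card : ℝ) / Fintype.card α * P.card))) := by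
  classical
  have hAc : Aᶜ.card = Fintype.card α - A.card := by rw [Finset.card_compl, hE]
  have hA : A.card ≤ Fintype.card α := by rw [← hE]; exact Finset.card_le_univ A
  have hm := moment P Aᶜ (by omega) hα
  have hα' : (0 : ℝ) < Fintype.card α := by exact_mod_cast hα
  have hq : ((Aᶜ.card : ℕ) : ℝ) / Fintype.card α = 1 - (A.card : ℝ) / Fintype.card α := by
    rw [hAc, Nat.cast_sub hA]; field_simp
  rw [hq] at hm
  set p := (A.card : ℝ) / Fintype.card α with hp
  have hp1 : p ≤ 1 := by rw [hp, div_le_one hα']; exact_mod_cast hA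
  set F := (univ : Finset (α ≃ E)).filter
      (fun σ => 2 * (P.filter (fun i => σ i ∈ A)).card ≤ L) with hF
  have h1 : (F.card : ℝ) * 4 ^ P.card ≤
      2 ^ L * ∑ σ : α ≃ E, (4 : ℝ) ^ (P.filter (fun i => σ i ∈ Aᶜ)).card := by
    rw [Finset.mul_sum, ← nsmul_eq_mul, ← Finset.sum_const]
    refine le_trans (Finset.sum_le_sum fun σ hσ => ?_)
      (Finset.sum_le_sum_of_subset_of_nonneg (Finset.subset_univ F) fun _ _ _ => by positivity)
    simp only [hF, mem_filter, mem_univ, true_and] at hσ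
    have e := Finset.card_filter_add_card_filter_not (s := P) (fun i => σ i ∈ A)
    simp only [Finset.mem_compl]
    rw [← e, pow_add]
    gcongr
    have : (4 : ℝ) = 2 ^ 2 := by norm_num
    rw [this, ← pow_mul]
    exact pow_le_pow_right₀ (by norm_num) hσ
  have h2 : (1 + 3 * (1 - p)) ^ P.card ≤ 4 ^ P.card * Real.exp (-(3 / 4) * (p * P.card)) := by
    have : Real.exp (-(3 / 4) * (p * P.card)) = Real.exp (-(3 / 4) * p) ^ P.card := by
      rw [← Real.exp_nat_mul]; ring_nf
    rw [this, ← mul_pow]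
    refine pow_le_pow_left₀ (by linarith) ?_ _
    have := Real.add_one_le_exp (-(3 / 4) * p)
    linarith
  have h4 : (0 : ℝ) < 4 ^ P.card := by positivity
  refine le_of_mul_le_mul_right ?_ h4
  calc (F.card : ℝ) * 4 ^ P.card ≤ _ := h1
    _ ≤ 2 ^ L * (Fintype.card (α ≃ E) * (4 ^ P.card * Real.exp (-(3 / 4) * (p * P.card)))) := by
      gcongr
      exact hm.trans (by gcongr)
    _ = _ := by ring

end Abstract

/-- Edges inside `U`. -/
def inside {n : ℕ} (U : Finset (Fin n)) : Finset (EdgeType n) :=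
  univ.filter (fun e => ∀ v ∈ e.1, v ∈ U)

lemma card_inside {n : ℕ} (U : Finset (Fin n)) : (inside U).card = U.card.choose 2 := by
  rw [← Sym2.card_image_offDiag, ← Finset.card_map (Function.Embedding.subtype _)]
  congr 1
  ext e
  induction e using Sym2.ind with
  | _ x y =>
    simp only [inside, Finset.mem_map, mem_filter, mem_univ, true_and, Function.Embedding.subtype_apply,
      mem_image, mem_offDiag, Prod.exists]
    constructor
    · rintro ⟨⟨a, ha⟩, h, rfl⟩
      exact ⟨x, y, ⟨h x (by simp), h y (by simp), by simpa using ha⟩, rfl⟩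
    · rintro ⟨a, b, ⟨ha, hb, hab⟩, h⟩
      refine ⟨⟨s(a, b), by simpa using hab⟩, ?_, h⟩
      intro v hv
      simp only [Sym2.mem_iff] at hv
      rcases hv with rfl | rfl <;> assumption

lemma numEdges_eq (n : ℕ) : numEdges n = n.choose 2 := by
  rw [numEdges, Nat.choose_two_right]

lemma card_edge (n : ℕ) : Fintype.card (EdgeType n) = numEdges n := by
  rw [numEdges_eq, Sym2.card_subtype_not_diag, Fintype.card_fin]

lemma buy_mono {n : ℕ} (st : Strategy n) (σ : Ord n) {i j : ℕ} (h : i ≤ j) :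
    buy st σ i ⊆ buy st σ j := by
  induction j, h using Nat.le_induction with
  | base => exact subset_rfl
  | succ j _ ih =>
    refine ih.trans ?_
    rw [buy]
    split_ifs
    · exact Finset.subset_insert _ _
    · exact subset_rfl
    · exact subset_rfl

lemma buy_notDiag {n : ℕ} (st : Strategy n) (σ : Ord n) (i : ℕ) :
    ∀ e ∈ buy st σ i, ¬ e.IsDiag := by
  induction i with
  | zero => simp [buy]
  | succ i ih =>
    rw [buy]
    split_ifs with h1 h2
    · intro e he
      rcases Finset.mem_insert.1 he with rfl | he
      · exact (σ ⟨i, h1⟩).2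
      · exact ih e he
    · exact ih
    · exact ih

lemma deg_mono {n : ℕ} {S T : Finset (Sym2 (Fin n))} (h : S ⊆ T) (v : Fin n) :
    deg S v ≤ deg T v :=
  Finset.card_le_card (Finset.filter_subset_filter _ h)

lemma double_count {n : ℕ} (S : Finset (Sym2 (Fin n))) (hS : ∀ e ∈ S, ¬ e.IsDiag)
    (U : Finset (Fin n)) :
    2 * (S.filter (fun e => ∀ v ∈ e, v ∈ U)).card ≤ ∑ v ∈ U, deg S v := by
  have h1 : ∑ v ∈ U, deg S v = ∑ e ∈ S, (U.filter (fun v => v ∈ e)).card := by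
    simp_rw [deg, Finset.card_filter]
    rw [Finset.sum_comm]
  rw [h1, mul_comm, ← smul_eq_mul, ← Finset.sum_const]
  refine le_trans (Finset.sum_le_sum fun e he => ?_)
    (Finset.sum_le_sum_of_subset (Finset.filter_subset _ S))
  rw [Finset.mem_filter] at he
  obtain ⟨he, hU⟩ := he
  have hd := hS e he
  induction e using Sym2.ind with
  | _ x y =>
    have hxy : x ≠ y := by simpa using hd
    rw [← Finset.card_pair hxy]
    apply Finset.card_le_card
    intro v hv
    simp only [mem_insert, mem_singleton] at hv
    rw [Finset.mem_filter]
    have : v ∈ s(x, y) := by simpa using hv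
    exact ⟨hU v this, this⟩

lemma determ {n : ℕ} (k : ℕ) (hk : 1 ≤ k) (st : Strategy n) (m : ℕ) (σ : Ord n)
    (hst : ∀ j : ℕ, ∀ hj : j < numEdges n, j < m →
      (∀ v ∈ ((σ ⟨j, hj⟩ : EdgeType n) : Sym2 (Fin n)), deg (buy st σ j) v < k) →
      ((σ ⟨j, hj⟩ : EdgeType n) : Sym2 (Fin n)) ∈ buy st σ (j + 1))
    (U : Finset (Fin n)) (hU : ∀ v ∈ U, deg (buy st σ m) v ≤ k - 1) :
    2 * (((univ : Finset (Fin (numEdges n))).filter (fun i : Fin (numEdges n) => (i : ℕ) < m)).filter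
      (fun i => σ i ∈ inside U)).card ≤ (k - 1) * n := by
  have h1 : (((univ : Finset (Fin (numEdges n))).filter (fun i : Fin (numEdges n) => (i : ℕ) < m)).filter
      (fun i => σ i ∈ inside U)).card ≤
      ((buy st σ m).filter (fun e => ∀ v ∈ e, v ∈ U)).card := by
    refine Finset.card_le_card_of_injOn (fun i => (σ i).1) ?_ ?_
    · intro i hi
      simp only [inside, coe_filter, mem_filter, mem_univ, true_and, Set.mem_ofPred_eq] at hi ⊢
      refine ⟨buy_mono st σ (Nat.succ_le_of_lt hi.1) (hst i i.2 hi.1 fun v hv => ?_), hi.2⟩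
      have a := deg_mono (buy_mono st σ hi.1.le) v
      have b := hU v (hi.2 v hv)
      omega
    · intro i _ j _ h
      exact σ.injective (Subtype.ext h)
  have h2 := double_count (buy st σ m) (buy_notDiag st σ m) U
  have h3 : ∑ v ∈ U, deg (buy st σ m) v ≤ U.card * (k - 1) := by
    rw [← smul_eq_mul, ← Finset.sum_const]
    exact Finset.sum_le_sum hU
  have h4 : U.card ≤ n := by simpa using Finset.card_le_univ U
  have h5 : U.card * (k - 1) ≤ (k - 1) * n := by rw [mul_comm]; gcongr
  omega

set_option maxHeartbeats 2000000 in
/-- Bound for fixed large `n`. -/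
lemma bad_bound (k : ℕ) (hk : 1 ≤ k) (ε : ℝ) (hε : 0 < ε) (hε1 : ε < 1) (n : ℕ)
    (hn1 : 20 * (1 + 1 / ε) ≤ n) (hn2 : 1 + 2 * (k * ε⁻¹ ^ 2) ≤ n)
    (st : Strategy n)
    (hst : ∀ σ : Ord n, ∀ j : ℕ, ∀ hj : j < numEdges n,
      j < ⌊(k : ℝ) * ε⁻¹ ^ 2 * (n : ℝ)⌋₊ →
      (∀ v ∈ ((σ ⟨j, hj⟩ : EdgeType n) : Sym2 (Fin n)), deg (buy st σ j) v < k) →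
      ((σ ⟨j, hj⟩ : EdgeType n) : Sym2 (Fin n)) ∈ buy st σ (j + 1)) :
    1 - (2 * Real.exp (-(57 / 80))) ^ n ≤ Pr (fun σ : Ord n =>
        ((((Finset.univ : Finset (Fin n)).filter
            (fun v => deg (buy st σ ⌊(k : ℝ) * ε⁻¹ ^ 2 * (n : ℝ)⌋₊) v ≤ k - 1)).card : ℝ)
          ≤ ε * n)) := by
  classical
  set m := ⌊(k : ℝ) * ε⁻¹ ^ 2 * (n : ℝ)⌋₊ with hm
  have hinv : 0 < 1 / ε := by positivity
  have hn0 : (20 : ℝ) < n := by linarith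
  have hk' : (1 : ℝ) ≤ k := by exact_mod_cast hk
  have hnN : (numEdges n : ℝ) = n * (n - 1) / 2 := by
    rw [numEdges_eq, Nat.cast_choose_two]
  have hNpos : (0 : ℝ) < numEdges n := by rw [hnN]; nlinarith
  have hNpos' : 0 < numEdges n := by exact_mod_cast hNpos
  have hmle : (m : ℝ) ≤ k * ε⁻¹ ^ 2 * n := Nat.floor_le (by positivity)
  have hmge : (k : ℝ) * ε⁻¹ ^ 2 * n - 1 < m := Nat.sub_one_lt_floor _
  have hmN : m ≤ numEdges n := by
    have : (m : ℝ) ≤ numEdges n := by rw [hnN]; nlinarith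
    exact_mod_cast this
  set P := (univ : Finset (Fin (numEdges n))).filter (fun i : Fin (numEdges n) => (i : ℕ) < m) with hP
  have hPc : P.card = m := by
    rw [hP, Fin.card_filter_val_lt]; exact min_eq_right hmN
  -- union bound
  set good : Ord n → Prop := fun σ => ((((Finset.univ : Finset (Fin n)).filter
            (fun v => deg (buy st σ m) v ≤ k - 1)).card : ℝ) ≤ ε * n) with hgood
  set big := (univ : Finset (Finset (Fin n))).filter (fun U => ε * n < U.card) with hbig
  set M := (Fintype.card (Ord n) : ℝ) with hM
  have hMpos : 0 < M := by
    rw [hM]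
    have : Nonempty (Ord n) := ⟨Fintype.equivOfCardEq (by rw [card_edge, Fintype.card_fin])⟩
    exact_mod_cast Fintype.card_pos
  have hsub : (univ : Finset (Ord n)).filter (fun σ => ¬ good σ) ⊆
      big.biUnion (fun U => (univ : Finset (Ord n)).filter
        (fun σ => 2 * (P.filter (fun i => σ i ∈ inside U)).card ≤ (k - 1) * n)) := by
    intro σ hσ
    simp only [mem_filter, mem_univ, true_and, hgood, not_le] at hσ
    simp only [mem_biUnion, mem_filter, mem_univ, true_and, hbig]
    refine ⟨_, hσ, determ k hk st m σ (hst σ) _ ?_⟩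
    intro v hv
    simpa using hv
  have hone : ∀ U ∈ big, (((univ : Finset (Ord n)).filter
        (fun σ => 2 * (P.filter (fun i => σ i ∈ inside U)).card ≤ (k - 1) * n)).card : ℝ) ≤
        M * (2 ^ ((k - 1) * n) * Real.exp (-(57 / 80)) ^ (k * n)) := by
    intro U hU
    simp only [hbig, mem_filter, mem_univ, true_and] at hU
    have ht := tail P (inside U) (by rw [card_edge, Fintype.card_fin])
      (by simpa using hNpos') ((k - 1) * n)
    refine ht.trans ?_
    rw [← Real.exp_nat_mul]
    gcongr ?_ * (?_ * Real.exp ?_)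
    rw [hPc, card_inside, Fintype.card_fin, hnN, Nat.cast_choose_two]
    push_cast
    have hεn : 1 ≤ ε * n := by
      have : 1 / ε ≤ n := by linarith
      rw [div_le_iff₀ hε] at this; linarith
    have hp : ε ^ 2 - ε / n ≤ (U.card : ℝ) * (U.card - 1) / 2 / (n * (n - 1) / 2) := by
      rw [le_div_iff₀ (by nlinarith)]
      have e : (ε ^ 2 - ε / n) * (n * (n - 1) / 2) = (ε * (ε * n - 1)) * (n - 1) / 2 := by
        field_simp
      rw [e]
      have : ε * (ε * n - 1) * (n - 1) ≤ ε * n * (ε * n - 1) := by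
        have : 0 ≤ ε * (ε * n - 1) := mul_nonneg hε.le (by linarith)
        nlinarith
      nlinarith
    have hp0 : 0 ≤ ε ^ 2 - ε / n := by
      rw [sub_nonneg, div_le_iff₀ (by linarith)]; nlinarith
    have hm0 : 0 ≤ (k : ℝ) * ε⁻¹ ^ 2 * n - 1 := by
      have : 1 ≤ ε⁻¹ := (one_le_inv₀ hε).2 hε1.le
      have : 1 ≤ ε⁻¹ ^ 2 := one_le_pow₀ this
      have : 1 ≤ k * ε⁻¹ ^ 2 := by nlinarith
      nlinarith
    have hpm : (ε ^ 2 - ε / n) * (k * ε⁻¹ ^ 2 * n - 1) ≤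
        (U.card : ℝ) * (U.card - 1) / 2 / (n * (n - 1) / 2) * m := by
      refine mul_le_mul hp hmge.le hm0 (hp0.trans hp)
    have e2 : (ε ^ 2 - ε / n) * (k * ε⁻¹ ^ 2 * n - 1) = k * n - ε ^ 2 - k * (1 / ε) + ε / n := by
      have : (n : ℝ) ≠ 0 := by linarith
      field_simp
      ring
    rw [e2] at hpm
    have : 0 ≤ ε / n := by positivity
    have : ε ^ 2 ≤ 1 := by nlinarith
    have : k * (20 * (1 + 1 / ε)) ≤ (k : ℝ) * n := by gcongr
    linarith
  have hcard : (((univ : Finset (Ord n)).filter (fun σ => ¬ good σ)).card : ℝ) ≤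
      M * (2 * Real.exp (-(57 / 80))) ^ n := by
    have h1 : (((univ : Finset (Ord n)).filter (fun σ => ¬ good σ)).card : ℝ) ≤
      ∑ U ∈ big, (((univ : Finset (Ord n)).filter
        (fun σ => 2 * (P.filter (fun i => σ i ∈ inside U)).card ≤ (k - 1) * n)).card : ℝ) := by
      exact_mod_cast (Finset.card_le_card hsub).trans Finset.card_biUnion_le
    have h2 := h1.trans (Finset.sum_le_sum hone)
    rw [Finset.sum_const, nsmul_eq_mul] at h2
    have h3 : (big.card : ℝ) ≤ 2 ^ n := by
      have : big.card ≤ 2 ^ n := by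
        refine (Finset.card_le_univ _).trans ?_
        rw [Fintype.card_finset, Fintype.card_fin]
      exact_mod_cast this
    refine h2.trans ?_
    have h4 : (2 : ℝ) ^ n * 2 ^ ((k - 1) * n) = 2 ^ (k * n) := by
      rw [← pow_add]
      congr 1
      obtain ⟨k, rfl⟩ := Nat.exists_eq_add_of_le hk
      simp; ring
    have h5 : 2 * Real.exp (-(57 / 80)) ≤ 1 := by
      have a : (2 : ℝ) ≤ Real.exp (57 / 80) := by
        rw [← Real.log_le_iff_le_exp (by norm_num)]
        have := Real.log_two_lt_d9
        linarith
      rw [Real.exp_neg, ← div_eq_mul_inv, div_le_one (Real.exp_pos _)]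
      exact a
    calc _ ≤ (2 : ℝ) ^ n * (M * (2 ^ ((k - 1) * n) * Real.exp (-(57 / 80)) ^ (k * n))) := by
          gcongr
      _ = M * ((2 ^ n * 2 ^ ((k - 1) * n)) * Real.exp (-(57 / 80)) ^ (k * n)) := by ring
      _ = M * (2 * Real.exp (-(57 / 80))) ^ (k * n) := by rw [h4, mul_pow]
      _ ≤ _ := by
          refine mul_le_mul_of_nonneg_left ?_ hMpos.le
          exact pow_le_pow_of_le_one (by positivity) h5 (Nat.le_mul_of_pos_left n hk)
  have htot : (((univ : Finset (Ord n)).filter good).card : ℝ) +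
      ((univ : Finset (Ord n)).filter (fun σ => ¬ good σ)).card = M := by
    rw [hM, ← Finset.card_univ]
    exact_mod_cast Finset.card_filter_add_card_filter_not (s := univ) good
  have : (1 - (2 * Real.exp (-(57 / 80))) ^ n) ≤
      (((univ : Finset (Ord n)).filter good).card : ℝ) / M := by
    rw [le_div_iff₀ hMpos]
    linarith
  unfold Pr
  convert this



/-- Let `k ≥ 1` be an integer, `ε ∈ (0,1)` a constant and `C = k·ε⁻²`.
If Builder follows any deterministic online strategy which purchases `e_i` whenever
`i ≤ ⌊Cn⌋` and both endpoints of `e_i` have degree less than `k` in `B_{i−1}`, then,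
with high probability, `B_{⌊Cn⌋}` has at most `εn` vertices of degree at most `k−1`. -/
theorem greedy_few_low_degree (k : ℕ) (hk : 1 ≤ k) (ε : ℝ) (hε : 0 < ε) (hε1 : ε < 1)
    (st : (n : ℕ) → Strategy n)
    (hst : ∀ n : ℕ, ∀ σ : Ord n, ∀ j : ℕ, ∀ hj : j < numEdges n,
      j < ⌊(k : ℝ) * ε⁻¹ ^ 2 * (n : ℝ)⌋₊ →
      (∀ v ∈ ((σ ⟨j, hj⟩ : EdgeType n) : Sym2 (Fin n)), deg (buy (st n) σ j) v < k) →
      ((σ ⟨j, hj⟩ : EdgeType n) : Sym2 (Fin n)) ∈ buy (st n) σ (j + 1)) :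
    Filter.Tendsto
      (fun n : ℕ => Pr (fun σ : Ord n =>
        ((((Finset.univ : Finset (Fin n)).filter
            (fun v => deg (buy (st n) σ ⌊(k : ℝ) * ε⁻¹ ^ 2 * (n : ℝ)⌋₊) v ≤ k - 1)).card : ℝ)
          ≤ ε * n)))
      Filter.atTop (nhds 1) := by
  have hr : 2 * Real.exp (-(57 / 80)) < 1 := by
    have a : (2 : ℝ) < Real.exp (57 / 80) := by
      rw [← Real.log_lt_iff_lt_exp (by norm_num)]
      have := Real.log_two_lt_d9
      linarith
    rw [Real.exp_neg, ← div_eq_mul_inv, div_lt_one (Real.exp_pos _)]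
    exact a
  have hlim : Filter.Tendsto (fun n : ℕ => 1 - (2 * Real.exp (-(57 / 80))) ^ n)
      Filter.atTop (nhds 1) := by
    have := tendsto_pow_atTop_nhds_zero_of_lt_one (by positivity) hr
    simpa using this.const_sub 1
  refine tendsto_of_tendsto_of_tendsto_of_le_of_le' hlim tendsto_const_nhds ?_ ?_
  · filter_upwards [tendsto_natCast_atTop_atTop.eventually_ge_atTop (20 * (1 + 1 / ε)),
      tendsto_natCast_atTop_atTop.eventually_ge_atTop (1 + 2 * ((k : ℝ) * ε⁻¹ ^ 2))] with n h1 h2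
    exact bad_bound k hk ε hε hε1 n h1 h2 (st n) (hst n)
  · refine Filter.Eventually.of_forall fun n => ?_
    unfold Pr
    refine div_le_one_of_le₀ ?_ (by positivity)
    exact_mod_cast Finset.card_le_univ _

end RGP
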